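/- arXiv:2412.16338 — 4 statements merged into one kernel-verified Lean document; each statement's English description precedes it below -/
import Mathlib

section
/- If G : ℝ × (0,∞) → ℝ satisfies property (G1), then for j = 0, 1, 2 the j-th derivative ∂_ω^j Ĝ(·,1) belongs to L^∞(ℝ) and sup_{ω∈ℝ}(1+|ω|^q)|ω|²|∂_ω^j Ĝ(ω,1)| < ∞. -/
open MeasureTheory Filter Topology

noncomputable section

/-- Fourier transform, convention `f̂ ω = ∫ e^{-iωx} f x dx`. -/
def FT (f : ℝ → ℂ) (ω : ℝ) : ℂ :=
  ∫ x : ℝ, Complex.exp (-(Complex.I * ω * x)) * f x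

/-- Fourier transform of a real-valued function. -/
def FTr (f : ℝ → ℝ) : ℝ → ℂ := FT fun x => (f x : ℂ)

/-- The quantity whose supremum over `ω` defines the `B_q` norm. -/
def bqFun (q : ℝ) (f : ℝ → ℂ) (ω : ℝ) : ℝ :=
  (1 + |ω| ^ q) * (‖FT f ω‖ + ‖deriv (FT f) ω‖ + ‖deriv (deriv (FT f)) ω‖)

/-- The `B_q` norm `‖f‖ = sup_ω (1+|ω|^q)(|f̂(ω)|+|f̂′(ω)|+|f̂″(ω)|)`. -/
def bqNorm (q : ℝ) (f : ℝ → ℂ) : ℝ := ⨆ ω : ℝ, bqFun q f ω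

/-- The `B_q` norm of a real-valued function. -/
def bqNormR (q : ℝ) (f : ℝ → ℝ) : ℝ := bqNorm q fun x => (f x : ℂ)

/-- Membership in the space `B_q`: `f ∈ L¹`, `f̂ ∈ C²`, finite `B_q` norm. -/
def MemBq (q : ℝ) (f : ℝ → ℂ) : Prop :=
  Integrable f ∧ ContDiff ℝ 2 (FT f) ∧ BddAbove (Set.range (bqFun q f))

/-- Membership in `B_q` for a real-valued function. -/
def MemBqR (q : ℝ) (f : ℝ → ℝ) : Prop := MemBq q fun x => (f x : ℂ)

/-- Condition (G1): there is an integer `M > 0` such that `G(·,1) ∈ C^{q+2}` with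
polynomial decay of all derivatives up to order `q+2`. -/
def CondG1 (G : ℝ → ℝ → ℝ) (q : ℕ) : Prop :=
  ∃ M : ℕ, 0 < M ∧ ContDiff ℝ (q + 2 : ℕ) (fun x => G x 1) ∧
    ∀ j ≤ q + 2, ∃ B : ℝ, ∀ x : ℝ,
      (1 + |x| + x ^ 2) * (1 + |x|) ^ (M + 1) *
        |iteratedDeriv j (fun y => G y 1) x| ≤ B

/-- Condition (G2): scaling `G(x,t) = t^{-1/d} G(t^{-1/d}x, 1)`. -/
def CondG2 (G : ℝ → ℝ → ℝ) (d : ℝ) : Prop :=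
  ∀ x t : ℝ, 0 < t →
    G x t = t ^ (-(1 : ℝ) / d) * G (t ^ (-(1 : ℝ) / d) * x) 1

/-- Condition (G3): the semigroup (convolution) property. -/
def CondG3 (G : ℝ → ℝ → ℝ) : Prop :=
  ∀ x t τ : ℝ, 0 < τ → τ < t → G x t = ∫ y : ℝ, G (x - y) (t - τ) * G y τ

/-- Conditions (G). -/
def CondsG (G : ℝ → ℝ → ℝ) (q : ℕ) (d : ℝ) : Prop :=
  CondG1 G q ∧ CondG2 G d ∧ CondG3 G

/-- Hypotheses on the coefficient `c`: positive, locally integrable on `(1,∞)`,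
and `c(t) = t^p + o(t^p)` as `t → ∞`. -/
def CondC (c : ℝ → ℝ) (p : ℝ) : Prop :=
  0 < p ∧ (∀ t : ℝ, 1 < t → 0 < c t) ∧
    LocallyIntegrableOn c (Set.Ioi 1) ∧
    (fun t => c t - t ^ p) =o[atTop] fun t => t ^ p

/-- `s(t) = ∫₁ᵗ c(τ) dτ`. -/
def sF (c : ℝ → ℝ) (t : ℝ) : ℝ := ∫ τ in (1:ℝ)..t, c τ

/-- `r(t) = s(t) − (t^{p+1}−1)/(p+1)`. -/
def rF (c : ℝ → ℝ) (p t : ℝ) : ℝ := sF c t - (t ^ (p + 1) - 1) / (p + 1)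

/-- Hypothesis on `L₀`: `L₀ > 1` and `|r(L)|/L^{p+1} < 1/(4(p+1))` for `L > L₀`. -/
def CondL0 (c : ℝ → ℝ) (p L₀ : ℝ) : Prop :=
  1 < L₀ ∧ ∀ L : ℝ, L₀ < L → |rF c p L| / L ^ (p + 1) < 1 / (4 * (p + 1))

/-- `L₁ = max {L₀, 3^{1/(p+1)}}`. -/
def Lone (p L₀ : ℝ) : ℝ := max L₀ ((3:ℝ) ^ ((1:ℝ) / (p + 1)))

/-- `s_n(t) = (s(Lⁿt) − s(Lⁿ))/L^{n(p+1)}`. -/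
def sn (c : ℝ → ℝ) (p L : ℝ) (n : ℕ) (t : ℝ) : ℝ :=
  (sF c (L ^ n * t) - sF c (L ^ n)) / L ^ ((n : ℝ) * (p + 1))

/-- `u_f(x,t) = ∫ G(x−y, s_n(t)) f(y) dy`. -/
def linSol (G : ℝ → ℝ → ℝ) (c : ℝ → ℝ) (p L : ℝ) (n : ℕ) (f : ℝ → ℝ)
    (x t : ℝ) : ℝ :=
  ∫ y : ℝ, G (x - y) (sn c p L n t) * f y

/-- The linear RG operator `(R⁰_{L,n}f)(x) = L^{2(p+1)/d} u_f(L^{(p+1)/d}x, L)`. -/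
def RG0 (G : ℝ → ℝ → ℝ) (c : ℝ → ℝ) (p d L : ℝ) (n : ℕ) (f : ℝ → ℝ) :
    ℝ → ℝ := fun x =>
  L ^ (2 * (p + 1) / d) * linSol G c p L n f (L ^ ((p + 1) / d) * x) L

/-- `R⁰_{Lⁿ} = R⁰_{L,n−1} ∘ ⋯ ∘ R⁰_{L,0}`. -/
def RG0iter (G : ℝ → ℝ → ℝ) (c : ℝ → ℝ) (p d L : ℝ) :
    ℕ → (ℝ → ℝ) → ℝ → ℝ
  | 0 => fun f => f
  | n + 1 => fun f => RG0 G c p d L n (RG0iter G c p d L n f)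

/-- `G_p(x) = ∂ₓ G(x, 1/(p+1))`. -/
def Gp (G : ℝ → ℝ → ℝ) (p : ℝ) : ℝ → ℝ :=
  fun x => deriv (fun y => G y (1 / (p + 1))) x

/-- The nonlinearity `F(u,u_x)(y,τ) = Σ_j a_j u(y,τ)^j ∂ₓu(y,τ)`. -/
def Fnl (a : ℕ → ℝ) (u : ℝ → ℝ → ℝ) (y τ : ℝ) : ℝ :=
  ∑' j : ℕ, a j * u y τ ^ j * deriv (fun z => u z τ) y

/-- The coefficients define a series analytic at the origin with positive
radius of convergence. -/
def AnalyticCoeffs (a : ℕ → ℝ) : Prop :=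
  ∃ ρ : ℝ, 0 < ρ ∧ ∀ z : ℝ, |z| < ρ → Summable fun j : ℕ => |a j| * |z| ^ j

/-- `u` solves the nonlinear integral equation for all `t > 1`. -/
def SolvesNL (G : ℝ → ℝ → ℝ) (c : ℝ → ℝ) (lam : ℝ) (a : ℕ → ℝ)
    (f : ℝ → ℝ) (u : ℝ → ℝ → ℝ) : Prop :=
  ∀ x : ℝ, ∀ t : ℝ, 1 < t → u x t =
    (∫ y : ℝ, G (x - y) (sF c t) * f y) +
      lam * ∫ τ in (1:ℝ)..t, ∫ y : ℝ,
        G (x - y) (sF c t - sF c τ) * Fnl a u y τ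

/-- The norm `‖u‖_L = sup_{t∈[1,L]} ‖u(·,t)‖` on `B^{(L)}`. -/
def normL (q L : ℝ) (u : ℝ → ℝ → ℝ) : ℝ :=
  ⨆ t : Set.Icc (1:ℝ) L, bqNormR q fun x => u x (t : ℝ)

/-- `d_F = (2α+3)(p+1) − 2(p+1) − d`. -/
def dF (p d : ℝ) (α : ℕ) : ℝ := (2 * (α : ℝ) + 3) * (p + 1) - 2 * (p + 1) - d

/-- The generalized coupling constant `λ_n = L^{-(n/d)[(2α+3)(p+1)−2(p+1)−d]} λ`. -/
def lamn (lam p d L : ℝ) (α n : ℕ) : ℝ :=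
  L ^ (-((n : ℝ) / d) * dF p d α) * lam

/-- The renormalized nonlinearity `F_{L,n}`. -/
def FnlRen (a : ℕ → ℝ) (p d L : ℝ) (α n : ℕ) (u : ℝ → ℝ → ℝ)
    (y τ : ℝ) : ℝ :=
  ∑' j : ℕ, a j * L ^ (2 * (n : ℝ) / d * (p + 1) * ((α : ℝ) - (j : ℝ))) *
    u y τ ^ j * deriv (fun z => u z τ) y

/-- The rescaled solution `u_n(x,t) = L^{2n(p+1)/d} u(L^{n(p+1)/d}x, Lⁿt)`. -/
def resc (u : ℝ → ℝ → ℝ) (p d L : ℝ) (n : ℕ) (x t : ℝ) : ℝ :=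
  L ^ (2 * (n : ℝ) * (p + 1) / d) *
    u (L ^ ((n : ℝ) * (p + 1) / d) * x) (L ^ n * t)

/-- `u` solves the `n`-th renormalized integral equation on `[1,L]` with data `f`. -/
def SolvesRen (G : ℝ → ℝ → ℝ) (c : ℝ → ℝ) (lam p d L : ℝ) (a : ℕ → ℝ)
    (α n : ℕ) (f : ℝ → ℝ) (u : ℝ → ℝ → ℝ) : Prop :=
  ∀ x : ℝ, ∀ t ∈ Set.Icc (1:ℝ) L, u x t =
    (∫ y : ℝ, G (x - y) (sn c p L n t) * f y) +
      lamn lam p d L α n * ∫ τ in (1:ℝ)..t, ∫ y : ℝ,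
        G (x - y) (sn c p L n t - sn c p L n τ) * FnlRen a p d L α n u y τ

end
open scoped FourierTransform in
lemma FT_eq_fourier (f : ℝ → ℂ) : FT f = fun ω => 𝓕 f ((2 * Real.pi)⁻¹ * ω) := by
  ext ω
  rw [Real.fourier_real_eq_integral_exp_smul]
  unfold FT
  refine integral_congr_ae (Eventually.of_forall fun x => ?_)
  simp only [smul_eq_mul]
  congr 2
  have : (Real.pi : ℂ) ≠ 0 := by exact_mod_cast Real.pi_ne_zero
  push_cast
  field_simp

lemma G1_integrable (g : ℝ → ℝ) (M : ℕ) (hc : Continuous g) (B : ℝ)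
    (hB : ∀ x : ℝ, (1 + |x| + x ^ 2) * (1 + |x|) ^ (M + 1) * |g x| ≤ B) (hM : 0 < M)
    (k : ℕ) (hk : k ≤ 2) : Integrable (fun x => ‖x‖ ^ k * ‖g x‖) := by
  refine (integrable_inv_one_add_sq.const_mul B).mono' (by fun_prop) ?_
  refine Eventually.of_forall fun x => ?_
  have hx := abs_nonneg x
  have h1 : |x| ^ k ≤ 1 + |x| + x ^ 2 := by
    rw [← sq_abs x]
    interval_cases k <;> nlinarith
  have h2 : 1 + x ^ 2 ≤ (1 + |x|) ^ (M + 1) := by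
    calc 1 + x ^ 2 ≤ (1 + |x|) ^ 2 := by rw [← sq_abs x]; nlinarith
      _ ≤ _ := pow_le_pow_right₀ (by linarith) (by omega)
  have h3 : 0 < 1 + x ^ 2 := by positivity
  rw [← div_eq_mul_inv, le_div_iff₀ h3]
  simp only [Real.norm_eq_abs, abs_mul, abs_pow, abs_abs]
  calc |x| ^ k * |g x| * (1 + x ^ 2) = (|x| ^ k * (1 + x ^ 2)) * |g x| := by ring
    _ ≤ (1 + |x| + x ^ 2) * (1 + |x|) ^ (M + 1) * |g x| := by gcongr
    _ ≤ B := hB x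

open scoped FourierTransform in
lemma FTr_pow_bound (G : ℝ → ℝ → ℝ) (q : ℕ) (hG1 : CondG1 G q) (j n : ℕ) (hj : j ≤ 2)
    (hn : n ≤ q + 2) :
    ∃ C : ℝ, ∀ ω : ℝ, |ω| ^ n * ‖iteratedDeriv j (FTr fun x => G x 1) ω‖ ≤ C := by
  obtain ⟨M, hM, hcd, hB⟩ := hG1
  set g : ℝ → ℝ := fun x => G x 1 with hg
  set f : ℝ → ℂ := fun x => (g x : ℂ) with hf
  have hfc : ContDiff ℝ (((q + 2 : ℕ) : ℕ∞) : WithTop ℕ∞) f :=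
    Complex.ofRealCLM.contDiff.comp hcd
  have hint : ∀ (k m : ℕ), (k : ℕ∞) ≤ ((2 : ℕ) : ℕ∞) → (m : ℕ∞) ≤ ((q + 2 : ℕ) : ℕ∞) →
      Integrable (fun v ↦ ‖v‖ ^ k * ‖iteratedFDeriv ℝ m f v‖) := by
    intro k m hk hm
    have hk' : k ≤ 2 := by exact_mod_cast hk
    have hm' : m ≤ q + 2 := by exact_mod_cast hm
    obtain ⟨B, hB⟩ := hB m hm'
    have := G1_integrable (iteratedDeriv m g) M
      (hcd.continuous_iteratedDeriv m (by exact_mod_cast hm')) B hB hM k hk'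
    refine this.congr (Eventually.of_forall fun x => ?_)
    simp only
    rw [← norm_iteratedFDeriv_eq_norm_iteratedDeriv]
    congr 1
    exact (Complex.ofRealLI.norm_iteratedFDeriv_comp_left (hcd.contDiffAt)
      (by exact_mod_cast hm')).symm
  have hF : ContDiff ℝ j (𝓕 f) := by
    have : ContDiff ℝ (((2 : ℕ) : ℕ∞) : WithTop ℕ∞) (𝓕 f) := by
      refine Real.contDiff_fourier fun k hk => ?_
      simpa using hint k 0 hk (by simp)
    exact this.of_le (by exact_mod_cast hj)
  have key := fun w => Real.pow_mul_norm_iteratedFDeriv_fourier_le hfc hint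
    (k := j) (n := n) (by exact_mod_cast hj) (by exact_mod_cast hn) w
  generalize ((2 * Real.pi) ^ j * (2 * (j : ℝ) + 2) ^ n * _ : ℝ) = D at key
  refine ⟨(2 * Real.pi) ^ n * ((2 * Real.pi)⁻¹ ^ j * D), fun ω => ?_⟩
  have e : iteratedDeriv j (FTr g) ω
      = (2 * Real.pi)⁻¹ ^ j • iteratedDeriv j (𝓕 f) ((2 * Real.pi)⁻¹ * ω) := by
    have : FTr g = fun ω => 𝓕 f ((2 * Real.pi)⁻¹ * ω) := FT_eq_fourier f
    rw [this]
    exact congrFun (iteratedDeriv_comp_const_smul hF (2 * Real.pi)⁻¹) ω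
  have hp : (0 : ℝ) < 2 * Real.pi := by positivity
  have k1 := key ((2 * Real.pi)⁻¹ * ω)
  rw [norm_iteratedFDeriv_eq_norm_iteratedDeriv, norm_mul, Real.norm_eq_abs, Real.norm_eq_abs,
    abs_of_pos (inv_pos.2 hp)] at k1
  rw [e, norm_smul, norm_pow, Real.norm_eq_abs, abs_of_pos (inv_pos.2 hp)]
  calc |ω| ^ n * ((2 * Real.pi)⁻¹ ^ j * ‖iteratedDeriv j (𝓕 f) ((2 * Real.pi)⁻¹ * ω)‖)
      = (2 * Real.pi) ^ n * ((2 * Real.pi)⁻¹ ^ j * ((((2 * Real.pi)⁻¹ * |ω|) ^ n) *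
        ‖iteratedDeriv j (𝓕 f) ((2 * Real.pi)⁻¹ * ω)‖)) := by
        have h1 : (2 * Real.pi) ^ n * ((2 * Real.pi)⁻¹ * |ω|) ^ n = |ω| ^ n := by
          rw [← mul_pow, mul_inv_cancel_left₀ hp.ne']
        rw [← h1]
        ring
    _ ≤ _ := by gcongr

/-- Lemma 2.2: boundedness and decay of `Ĝ^{(j)}(·,1)`,
`j = 0, 1, 2`. -/
theorem fourier_kernel_bounds
    (G : ℝ → ℝ → ℝ) (q : ℕ) (hq : 1 < q) (hG1 : CondG1 G q) :
    ∀ j : ℕ, j ≤ 2 →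
      (∃ K : ℝ, ∀ ω : ℝ, ‖iteratedDeriv j (FTr fun x => G x 1) ω‖ ≤ K) ∧
        ∃ C : ℝ, ∀ ω : ℝ,
          (1 + |ω| ^ (q : ℝ)) * |ω| ^ 2 *
            ‖iteratedDeriv j (FTr fun x => G x 1) ω‖ ≤ C := by
  intro j hj
  obtain ⟨C0, h0⟩ := FTr_pow_bound G q hG1 j 0 hj (by omega)
  obtain ⟨C2, h2⟩ := FTr_pow_bound G q hG1 j 2 hj (by omega)
  obtain ⟨C3, h3⟩ := FTr_pow_bound G q hG1 j (q + 2) hj le_rfl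
  refine ⟨⟨C0, fun ω => by simpa using h0 ω⟩, C2 + C3, fun ω => ?_⟩
  rw [Real.rpow_natCast]
  have a := h2 ω
  have b := h3 ω
  rw [pow_add] at b
  linarith
end

section
/- Suppose G : ℝ × (0,∞) → ℝ satisfies properties (G1), (G2) and (G3). Given 0 < t₁ < t₂, then for all ω ∈ ℝ: (i) |Ĝ(ω,t₂)| ≤ K₀|Ĝ(ω,t₁)|; (ii) |∂_ω Ĝ(ω,t₂)| ≤ K₁(t₂−t₁)^{1/d}|Ĝ(ω,t₁)| + K₀|∂_ω Ĝ(ω,t₁)|; (iii) |∂_ω² Ĝ(ω,t₂)| ≤ K₂(t₂−t₁)^{2/d}|Ĝ(ω,t₁)| + 2K₁(t₂−t₁)^{1/d}|∂_ω Ĝ(ω,t₁)| + K₀|∂_ω² Ĝ(ω,t₁)|. -/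
open MeasureTheory Filter Topology

/-- `K_j = sup_ω |∂_ω^j Ĝ(ω,1)|`. -/
noncomputable def Ksup (G : ℝ → ℝ → ℝ) (j : ℕ) : ℝ :=
  ⨆ ω : ℝ, ‖iteratedDeriv j (FTr fun x => G x 1) ω‖

lemma aux_norm_exp (ω x : ℝ) : ‖Complex.exp (-(Complex.I * ω * x))‖ = 1 := by
  rw [Complex.norm_exp]; simp

lemma aux_int_exp {f : ℝ → ℂ} (hf : Integrable f) (ω : ℝ) :
    Integrable fun x : ℝ => Complex.exp (-(Complex.I * ω * x)) * f x := by
  refine hf.bdd_mul (c := 1) (Continuous.aestronglyMeasurable (by fun_prop)) ?_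
  exact Eventually.of_forall fun x => (aux_norm_exp ω x).le

lemma aux_FT_bound (f : ℝ → ℂ) (ω : ℝ) : ‖FT f ω‖ ≤ ∫ x, ‖f x‖ := by
  refine (norm_integral_le_integral_norm _).trans (le_of_eq ?_)
  simp only [norm_mul, aux_norm_exp, one_mul]

lemma aux_FT_deriv {f : ℝ → ℂ} (hf : Integrable f)
    (hxf : Integrable fun x : ℝ => -(Complex.I * x) * f x) (ω : ℝ) :
    HasDerivAt (FT f) (FT (fun x : ℝ => -(Complex.I * x) * f x) ω) ω := by
  have := hasDerivAt_integral_of_dominated_loc_of_deriv_le (μ := volume) (𝕜 := ℝ)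
    (F := fun (w x : ℝ) => Complex.exp (-(Complex.I * w * x)) * f x)
    (F' := fun (w x : ℝ) => Complex.exp (-(Complex.I * w * x)) * (-(Complex.I * x) * f x))
    (x₀ := ω) (s := Set.univ) (bound := fun x : ℝ => ‖-(Complex.I * x) * f x‖)
    Filter.univ_mem
    (Eventually.of_forall fun w => (aux_int_exp hf w).aestronglyMeasurable)
    (aux_int_exp hf ω) (aux_int_exp hxf ω).aestronglyMeasurable
    (Eventually.of_forall fun x w _ => by
      rw [norm_mul, aux_norm_exp, one_mul])
    hxf.norm
    (Eventually.of_forall fun x w _ => by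
      have h1 : HasDerivAt (fun w : ℝ => -(Complex.I * (w : ℂ) * x)) (-(Complex.I * 1 * x)) w :=
        (((Complex.ofRealCLM.hasDerivAt (x := w)).const_mul Complex.I).mul_const (x : ℂ)).neg
      have h2 := (h1.cexp).mul_const (f x)
      exact h2.congr_deriv (by ring))
  exact this.2

lemma aux_conv (f g h : ℝ → ℝ) (hf : Integrable f) (hg : Integrable g)
    (hh : ∀ x, h x = ∫ y, g (x - y) * f y) (ω : ℝ) :
    FTr h ω = FTr g ω * FTr f ω := by
  have hf' : Integrable fun x => (f x : ℂ) := hf.ofReal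
  have hg' : Integrable fun x => (g x : ℂ) := hg.ofReal
  have := integral_convolution (μ := (volume : Measure ℝ)) (ν := (volume : Measure ℝ))
    (ContinuousLinearMap.mul ℝ ℂ) (aux_int_exp hf' ω) (aux_int_exp hg' ω)
  rw [ContinuousLinearMap.mul_apply'] at this
  rw [mul_comm (FTr g ω)]
  refine Eq.trans ?_ this
  unfold FTr FT
  congr 1
  ext x
  beta_reduce
  rw [convolution_def, hh x, ← integral_complex_ofReal, ← integral_const_mul]
  congr 1
  ext y
  have : Complex.exp (-(Complex.I * ω * x)) =
      Complex.exp (-(Complex.I * ω * y)) * Complex.exp (-(Complex.I * ω * (x - y : ℝ))) := by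
    rw [← Complex.exp_add]; congr 1; push_cast; ring
  simp only [ContinuousLinearMap.mul_apply', this]
  push_cast
  ring

lemma aux_scale (g : ℝ → ℝ) (a : ℝ) (ha : 0 < a) (ω : ℝ) :
    FTr (fun x => a * g (a * x)) ω = FTr g (a⁻¹ * ω) := by
  have := Measure.integral_comp_mul_left
    (fun y : ℝ => Complex.exp (-(Complex.I * (a⁻¹ * ω : ℝ) * y)) * (g y : ℂ)) a
  rw [abs_of_pos (inv_pos.2 ha)] at this
  have h2 : FTr g (a⁻¹ * ω) = a • (a⁻¹ • FTr g (a⁻¹ * ω)) := by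
    rw [smul_smul, mul_inv_cancel₀ ha.ne', one_smul]
  rw [h2]
  unfold FTr FT at *
  rw [← this, ← integral_smul]
  congr 1
  ext x
  have ha' : (a : ℂ) ≠ 0 := by exact_mod_cast ha.ne'
  have h3 : Complex.I * ((a⁻¹ * ω : ℝ) : ℂ) * ((a * x : ℝ) : ℂ) = Complex.I * ω * x := by
    push_cast; field_simp
  rw [h3, Complex.real_smul]
  push_cast
  ring

lemma aux_int_of_bound {f : ℝ → ℂ} (hc : Continuous f) (B : ℝ)
    (hB : ∀ x, (1 + x ^ 2) * ‖f x‖ ≤ B) : Integrable f := by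
  refine (integrable_inv_one_add_sq.const_mul B).mono' hc.aestronglyMeasurable
    (Eventually.of_forall fun x => ?_)
  have : (0:ℝ) < 1 + x ^ 2 := by positivity
  rw [← div_eq_mul_inv, le_div_iff₀ this, mul_comm]
  exact hB x

/-- Lemma 2.3: monotone-type bounds for `Ĝ` and its first two
derivatives at two times `0 < t₁ < t₂`. -/
theorem fourier_kernel_decrease
    (G : ℝ → ℝ → ℝ) (q : ℕ) (d : ℝ) (hq : 1 < q) (hd : 0 < d)
    (hG : CondsG G q d) (t₁ t₂ : ℝ) (h1 : 0 < t₁) (h12 : t₁ < t₂) :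
    ∀ ω : ℝ,
      ‖FTr (fun x => G x t₂) ω‖ ≤ Ksup G 0 * ‖FTr (fun x => G x t₁) ω‖ ∧
      ‖deriv (FTr fun x => G x t₂) ω‖ ≤
        Ksup G 1 * (t₂ - t₁) ^ ((1:ℝ)/d) * ‖FTr (fun x => G x t₁) ω‖ +
          Ksup G 0 * ‖deriv (FTr fun x => G x t₁) ω‖ ∧
      ‖deriv (deriv (FTr fun x => G x t₂)) ω‖ ≤
        Ksup G 2 * (t₂ - t₁) ^ ((2:ℝ)/d) * ‖FTr (fun x => G x t₁) ω‖ +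
          2 * Ksup G 1 * (t₂ - t₁) ^ ((1:ℝ)/d) *
            ‖deriv (FTr fun x => G x t₁) ω‖ +
          Ksup G 0 * ‖deriv (deriv (FTr fun x => G x t₁)) ω‖ := by
  obtain ⟨⟨M, hM, hcd, hdec⟩, hG2, hG3⟩ := hG
  obtain ⟨B, hB⟩ := hdec 0 (by omega)
  simp only [iteratedDeriv_zero] at hB
  have hcont : Continuous fun x => G x 1 := hcd.continuous
  have hB' : ∀ x : ℝ, (1 + |x| + x ^ 2) * (1 + x ^ 2) * |G x 1| ≤ B := by
    intro x
    refine le_trans ?_ (hB x)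
    gcongr
    calc 1 + x ^ 2 ≤ (1 + |x|) ^ 2 := by nlinarith [abs_nonneg x, sq_abs x]
      _ ≤ (1 + |x|) ^ (M + 1) :=
        pow_le_pow_right₀ (by linarith [abs_nonneg x]) (by omega)
  set g : ℝ → ℂ := fun x => (G x 1 : ℂ) with hg
  have hgc : Continuous g := by fun_prop
  have hgn : ∀ x, ‖g x‖ = |G x 1| := fun x => by simp [hg]
  have i0 : Integrable g := by
    refine aux_int_of_bound hgc B fun x => le_trans ?_ (hB' x)
    rw [hgn]
    gcongr
    nlinarith [abs_nonneg x, sq_nonneg x, mul_nonneg (abs_nonneg x) (sq_nonneg x)]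
  have i1 : Integrable fun x : ℝ => -(Complex.I * x) * g x := by
    refine aux_int_of_bound (by fun_prop) B fun x => le_trans ?_ (hB' x)
    have : ‖-(Complex.I * x) * g x‖ = |x| * |G x 1| := by simp [hg]
    rw [this, ← mul_assoc]
    refine mul_le_mul_of_nonneg_right ?_ (abs_nonneg _)
    nlinarith [abs_nonneg x, sq_nonneg x, mul_nonneg (abs_nonneg x) (sq_nonneg x)]
  have i2 : Integrable fun x : ℝ => -(Complex.I * x) * (-(Complex.I * x) * g x) := by
    refine aux_int_of_bound (by fun_prop) B fun x => le_trans ?_ (hB' x)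
    have : ‖-(Complex.I * x) * (-(Complex.I * x) * g x)‖ = x ^ 2 * |G x 1| := by
      simp only [norm_mul, norm_neg, Complex.norm_I, Complex.norm_real, Real.norm_eq_abs, hgn]
      rw [← sq_abs x]; ring
    rw [this, ← mul_assoc]
    refine mul_le_mul_of_nonneg_right ?_ (abs_nonneg _)
    nlinarith [abs_nonneg x, sq_nonneg x, mul_nonneg (abs_nonneg x) (sq_nonneg x)]
  set F : ℝ → ℂ := FTr fun x => G x 1 with hF
  set F1 : ℝ → ℂ := FT fun x : ℝ => -(Complex.I * x) * g x with hF1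
  set F2 : ℝ → ℂ := FT fun x : ℝ => -(Complex.I * x) * (-(Complex.I * x) * g x) with hF2
  have d1 : ∀ w, HasDerivAt F (F1 w) w := fun w => aux_FT_deriv i0 i1 w
  have d2 : ∀ w, HasDerivAt F1 (F2 w) w := fun w => aux_FT_deriv i1 i2 w
  have e1 : deriv F = F1 := funext fun w => (d1 w).deriv
  have e2 : deriv F1 = F2 := funext fun w => (d2 w).deriv
  have k0 : ∀ w, ‖F w‖ ≤ Ksup G 0 := by
    intro w
    unfold Ksup
    simp only [iteratedDeriv_zero]
    refine le_ciSup (f := fun w => ‖F w‖) ⟨∫ x, ‖g x‖, ?_⟩ w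
    rintro _ ⟨v, rfl⟩
    exact aux_FT_bound _ _
  have k1 : ∀ w, ‖F1 w‖ ≤ Ksup G 1 := by
    intro w
    unfold Ksup
    simp only [iteratedDeriv_one]
    rw [← hF, e1]
    refine le_ciSup (f := fun w => ‖F1 w‖) ⟨∫ x : ℝ, ‖-(Complex.I * x) * g x‖, ?_⟩ w
    rintro _ ⟨v, rfl⟩
    exact aux_FT_bound _ _
  have k2 : ∀ w, ‖F2 w‖ ≤ Ksup G 2 := by
    intro w
    unfold Ksup
    simp only [iteratedDeriv_succ, iteratedDeriv_zero]
    rw [← hF, e1, e2]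
    refine le_ciSup (f := fun w => ‖F2 w‖)
      ⟨∫ x : ℝ, ‖-(Complex.I * x) * (-(Complex.I * x) * g x)‖, ?_⟩ w
    rintro _ ⟨v, rfl⟩
    exact aux_FT_bound _ _
  have hGint1 : Integrable fun x => G x 1 := by
    have := i0.re
    simpa [hg] using this
  have hscale : ∀ t : ℝ, 0 < t → ∀ w, FTr (fun x => G x t) w = F (t ^ ((1:ℝ)/d) * w) := by
    intro t ht w
    have h := aux_scale (fun x => G x 1) (t ^ (-(1:ℝ)/d)) (Real.rpow_pos_of_pos ht _) w
    have h' : (fun x => G x t) = fun x => t ^ (-(1:ℝ)/d) * G (t ^ (-(1:ℝ)/d) * x) 1 :=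
      funext fun x => hG2 x t ht
    rw [h', h, ← Real.rpow_neg ht.le, neg_div, neg_neg]
  have hint : ∀ t : ℝ, 0 < t → Integrable fun x => G x t := by
    intro t ht
    have h' : (fun x => G x t) = fun x => t ^ (-(1:ℝ)/d) * G (t ^ (-(1:ℝ)/d) * x) 1 :=
      funext fun x => hG2 x t ht
    rw [h']
    exact (hGint1.comp_mul_left' (Real.rpow_pos_of_pos ht _).ne').const_mul _
  have hs : 0 < t₂ - t₁ := sub_pos.2 h12
  set a : ℝ := (t₂ - t₁) ^ ((1:ℝ)/d) with ha
  set b : ℝ := t₁ ^ ((1:ℝ)/d) with hb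
  have ha0 : 0 ≤ a := Real.rpow_nonneg hs.le _
  have ha2 : (t₂ - t₁) ^ ((2:ℝ)/d) = a ^ 2 := by
    rw [ha, ← Real.rpow_natCast, ← Real.rpow_mul hs.le]; congr 1; push_cast; ring
  have H1 : (FTr fun x => G x t₁) = fun w => F (b * w) := funext fun w => hscale t₁ h1 w
  have H2 : (FTr fun x => G x t₂) = fun w => F (a * w) * F (b * w) := funext fun w => by
    rw [aux_conv _ _ _ (hint t₁ h1) (hint _ hs) (fun x => hG3 x t₂ t₁ h1 h12) w,
      hscale _ hs, hscale _ h1]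
  have D1 : ∀ c w : ℝ, HasDerivAt (fun w : ℝ => F (c * w)) (c * F1 (c * w)) w := by
    intro c w
    have := (d1 (c * w)).scomp w ((hasDerivAt_id w).const_mul c)
    simpa [Function.comp_def] using this
  have D2 : ∀ c w : ℝ, HasDerivAt (fun w : ℝ => (c : ℂ) * F1 (c * w))
      (c * (c * F2 (c * w))) w := by
    intro c w
    have := ((d2 (c * w)).scomp w ((hasDerivAt_id w).const_mul c)).const_mul (c : ℂ)
    simpa [Function.comp_def] using this
  have E1 : deriv (fun w => F (b * w)) = fun w : ℝ => (b : ℂ) * F1 (b * w) :=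
    funext fun w => (D1 b w).deriv
  have E2 : deriv (fun w : ℝ => (b : ℂ) * F1 (b * w)) = fun w : ℝ => (b : ℂ) * (b * F2 (b * w)) :=
    funext fun w => (D2 b w).deriv
  have P1 : deriv (fun w => F (a * w) * F (b * w)) = fun w : ℝ =>
      (a : ℂ) * F1 (a * w) * F (b * w) + F (a * w) * (b * F1 (b * w)) :=
    funext fun w => ((D1 a w).mul (D1 b w)).deriv
  have P2 : ∀ w : ℝ, deriv (fun w : ℝ =>
      (a : ℂ) * F1 (a * w) * F (b * w) + F (a * w) * (b * F1 (b * w))) w =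
      (a * (a * F2 (a * w)) * F (b * w) + a * F1 (a * w) * (b * F1 (b * w))) +
      (a * F1 (a * w) * (b * F1 (b * w)) + F (a * w) * (b * (b * F2 (b * w)))) :=
    fun w => (((D2 a w).mul (D1 b w)).add ((D1 a w).mul (D2 b w))).deriv
  intro ω
  rw [H1, H2, P1, E1, P2, E2, ha2]
  have na : ‖(a : ℂ)‖ = a := by rw [Complex.norm_real, Real.norm_of_nonneg ha0]
  refine ⟨?_, ?_, ?_⟩
  · rw [norm_mul]
    exact mul_le_mul_of_nonneg_right (k0 _) (norm_nonneg _)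
  · refine (norm_add_le _ _).trans ?_
    rw [norm_mul, norm_mul (a : ℂ), na, norm_mul (F _), mul_comm (Ksup G 1) a]
    gcongr
    · exact k1 _
    · exact k0 _
  · have m0 := mul_le_mul_of_nonneg_right (k0 (a * ω)) (norm_nonneg ((b : ℂ) * (b * F2 (b * ω))))
    have m1 := mul_le_mul_of_nonneg_right (k1 (a * ω))
      (mul_nonneg ha0 (norm_nonneg ((b : ℂ) * F1 (b * ω))))
    have m2 := mul_le_mul_of_nonneg_right (k2 (a * ω))
      (mul_nonneg (sq_nonneg a) (norm_nonneg (F (b * ω))))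
    refine (norm_add_le _ _).trans ((add_le_add (norm_add_le _ _) (norm_add_le _ _)).trans ?_)
    have q1 : ‖(a : ℂ) * (a * F2 (a * ω)) * F (b * ω)‖
        = ‖F2 (a * ω)‖ * (a ^ 2 * ‖F (b * ω)‖) := by
      simp only [norm_mul, na]; ring
    have q2 : ‖(a : ℂ) * F1 (a * ω) * (b * F1 (b * ω))‖
        = ‖F1 (a * ω)‖ * (a * ‖(b : ℂ) * F1 (b * ω)‖) := by
      rw [norm_mul, norm_mul (a : ℂ), na]; ring
    rw [q1, q2, norm_mul (F _)]
    linarith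
end

section
/- For every L > L₁ and every integer n ≥ 0, the rescaled time function satisfies 1/[6(p+1)] < s_n(L)/L^{p+1} < 3/[2(p+1)]. -/
open MeasureTheory Filter Topology

/-- estimate (2.12): bounds for `s_n(L)/L^{p+1}` for `L > L₁`. -/
theorem sn_bounds (c : ℝ → ℝ) (p L₀ : ℝ) (hc : CondC c p)
    (hL₀ : CondL0 c p L₀) :
    ∀ L : ℝ, Lone p L₀ < L → ∀ n : ℕ,
      1 / (6 * (p + 1)) < sn c p L n L / L ^ (p + 1) ∧
        sn c p L n L / L ^ (p + 1) < 3 / (2 * (p + 1)) := by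
  intro L hL n
  obtain ⟨hp, -, -, -⟩ := hc
  obtain ⟨h1, hr⟩ := hL₀
  have hq : 0 < p + 1 := by linarith
  have hLL : L₀ < L := lt_of_le_of_lt (le_max_left _ _) hL
  have hL1 : 1 < L := h1.trans hLL
  have hLpos : 0 < L := by linarith
  have hX3 : 3 < L ^ (p + 1) := by
    have h3 : (3:ℝ) ^ ((1:ℝ) / (p + 1)) < L := lt_of_le_of_lt (le_max_right _ _) hL
    have h4 := Real.rpow_lt_rpow (by positivity) h3 hq
    rw [← Real.rpow_mul (by norm_num), one_div_mul_cancel hq.ne', Real.rpow_one] at h4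
    exact h4
  -- the bound on `r` along the powers of `L`
  have hpow : ∀ m : ℕ, |rF c p (L ^ m)| < (L ^ m) ^ (p + 1) * (1 / (4 * (p + 1))) := by
    intro m
    have hpos : 0 < (L ^ m) ^ (p + 1) := by positivity
    rcases Nat.eq_zero_or_pos m with hm | hm
    · subst hm
      simp only [rF, sF, pow_zero, intervalIntegral.integral_same, Real.one_rpow]
      simp
      positivity
    · have hle : L ≤ L ^ m := le_self_pow₀ hL1.le (by omega)
      have h5 := hr (L ^ m) (lt_of_lt_of_le hLL hle)
      rw [div_lt_iff₀ hpos] at h5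
      linarith
  have ha := hpow n
  have hb := hpow (n + 1)
  have hA : L ^ ((n : ℝ) * (p + 1)) = (L ^ n) ^ (p + 1) := by
    rw [Real.rpow_mul hLpos.le, Real.rpow_natCast]
  have hAX : (L ^ (n + 1)) ^ (p + 1) = (L ^ n) ^ (p + 1) * L ^ (p + 1) := by
    rw [pow_succ, Real.mul_rpow (by positivity) hLpos.le]
  have hs : ∀ t, sF c t = rF c p t + (t ^ (p + 1) - 1) * (1 / (p + 1)) := by
    intro t
    simp only [rF]
    ring
  have hApos : 0 < (L ^ n) ^ (p + 1) := by positivity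
  unfold sn
  rw [← pow_succ, hs, hs, hA, hAX, div_div]
  rw [hAX] at hb
  have e4 : 1 / (4 * (p + 1)) = 1 / (p + 1) * (1 / 4) := by field_simp
  have e6 : 1 / (6 * (p + 1)) = 1 / (p + 1) * (1 / 6) := by field_simp
  have e2 : 3 / (2 * (p + 1)) = 1 / (p + 1) * (3 / 2) := by field_simp
  rw [e4] at ha hb
  rw [e6, e2]
  have hk : 0 < 1 / (p + 1) := by positivity
  generalize 1 / (p + 1) = k at *
  generalize L ^ (p + 1) = X at *
  generalize (L ^ n) ^ (p + 1) = A at *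
  generalize rF c p (L ^ n) = u at *
  generalize rF c p (L ^ (n + 1)) = v at *
  rw [abs_lt] at ha hb
  have hAk : 0 < A * k := by positivity
  have hAkX : 3 * (A * k) < A * k * X := by nlinarith
  have hpos : 0 < A * X := by positivity
  rw [lt_div_iff₀ hpos, div_lt_iff₀ hpos]
  constructor <;> nlinarith [ha.1, ha.2, hb.1, hb.2]
end

section
/- There is a constant K̃ such that ‖R⁰_{Lⁿ} G_p‖ ≤ K̃ for all L > L₁ and all integers n ≥ 1, where the norm is the B_q norm. -/
open MeasureTheory Filter Topology

/-- Decay of the derivatives of `g = G(·,1)`. -/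
lemma aux_decay {G : ℝ → ℝ → ℝ} {q : ℕ} (h : CondG1 G q) (j : ℕ) (hj : j ≤ q + 2) :
    ∃ B : ℝ, ∀ a ≤ 2, ∀ x : ℝ,
      |x| ^ a * |iteratedDeriv j (fun y => G y 1) x| ≤ B * (1 + x ^ 2)⁻¹ := by
  obtain ⟨M, hM, -, hB⟩ := h
  obtain ⟨B, hB⟩ := hB j hj
  refine ⟨B, fun a ha x => ?_⟩
  set y := |iteratedDeriv j (fun y => G y 1) x| with hy
  have hy0 : 0 ≤ y := abs_nonneg _
  have hx : 0 ≤ |x| := abs_nonneg x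
  have h1 : |x| ^ a ≤ 1 + |x| + x ^ 2 := by
    have : x ^ 2 = |x| ^ 2 := (sq_abs x).symm
    rw [this]
    interval_cases a <;> nlinarith [sq_nonneg |x|]
  have h2 : 1 + x ^ 2 ≤ (1 + |x|) ^ (M + 1) := by
    calc 1 + x ^ 2 ≤ (1 + |x|) ^ 2 := by rw [← sq_abs x]; nlinarith
      _ ≤ _ := pow_le_pow_right₀ (by linarith) (by omega)
  rw [← div_eq_mul_inv, le_div_iff₀ (by positivity)]
  calc |x| ^ a * y * (1 + x ^ 2) = |x| ^ a * (1 + x ^ 2) * y := by ring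
    _ ≤ (1 + |x| + x ^ 2) * (1 + |x|) ^ (M + 1) * y := by gcongr
    _ ≤ B := hB x

lemma aux_int {G : ℝ → ℝ → ℝ} {q : ℕ} (h : CondG1 G q) (j : ℕ) (hj : j ≤ q + 2)
    (a : ℕ) (ha : a ≤ 2) :
    Integrable (fun x : ℝ => |x| ^ a * |iteratedDeriv j (fun y => G y 1) x|) := by
  obtain ⟨B, hB⟩ := aux_decay h j hj
  obtain ⟨M, hM, hC, -⟩ := h
  have hc : Continuous (iteratedDeriv j (fun y => G y 1)) :=
    hC.continuous_iteratedDeriv j (by exact_mod_cast hj)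
  refine (integrable_inv_one_add_sq.const_mul B).mono' ?_ (Eventually.of_forall fun x => ?_)
  · exact ((continuous_abs.pow a).mul hc.abs).aestronglyMeasurable
  · rw [Real.norm_of_nonneg (by positivity)]
    exact hB a ha x

/-- The complexified derivative of `g`. -/
noncomputable def gC (G : ℝ → ℝ → ℝ) : ℝ → ℂ := fun x => ((deriv (fun y => G y 1) x : ℝ) : ℂ)

lemma aux_deriv_contDiff {G : ℝ → ℝ → ℝ} {q : ℕ} (h : CondG1 G q) :
    ContDiff ℝ (q + 1 : ℕ) (deriv (fun y => G y 1)) := by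
  obtain ⟨M, hM, hC, -⟩ := h
  have hC' : ContDiff ℝ (((q + 1 : ℕ) : WithTop ℕ∞) + 1) (fun y => G y 1) := by
    exact_mod_cast hC
  exact (contDiff_succ_iff_deriv.1 hC').2.2

lemma aux_norm_iter {G : ℝ → ℝ → ℝ} {q : ℕ} (h : CondG1 G q) (b : ℕ) (hb : b ≤ q + 1) (x : ℝ) :
    ‖iteratedFDeriv ℝ b (gC G) x‖ = |iteratedDeriv (b + 1) (fun y => G y 1) x| := by
  have h1 := aux_deriv_contDiff h
  have h2 : gC G = Complex.ofRealLI ∘ (deriv (fun y => G y 1)) := rfl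
  rw [h2, LinearIsometry.norm_iteratedFDeriv_comp_left (n := (q + 1 : ℕ)) _ h1.contDiffAt
    (by exact_mod_cast hb), norm_iteratedFDeriv_eq_norm_iteratedDeriv, iteratedDeriv_succ',
    Real.norm_eq_abs]

open FourierTransform in
lemma aux_fourier {G : ℝ → ℝ → ℝ} {q : ℕ} (h : CondG1 G q) :
    ∃ C : ℝ, ∀ k ≤ 2, ∀ v : ℝ, (1 + |v| ^ q) * ‖iteratedDeriv k (𝓕 (gC G)) v‖ ≤ C := by
  have hf : ContDiff ℝ ((q : ℕ∞) : WithTop ℕ∞) (gC G) := by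
    have h1 : ContDiff ℝ ((q : ℕ∞) : WithTop ℕ∞) (deriv (fun y => G y 1)) :=
      (aux_deriv_contDiff h).of_le (by exact_mod_cast Nat.le_succ q)
    exact Complex.ofRealCLM.contDiff.comp h1
  have hi : ∀ (k n : ℕ), (k : ℕ∞) ≤ (2 : ℕ) → (n : ℕ∞) ≤ (q : ℕ) →
      Integrable (fun v : ℝ ↦ ‖v‖ ^ k * ‖iteratedFDeriv ℝ n (gC G) v‖) := by
    intro k n hk hn
    have hk' : k ≤ 2 := by exact_mod_cast hk
    have hn' : n ≤ q := by exact_mod_cast hn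
    have := aux_int h (n + 1) (by omega) k hk'
    refine this.congr (Eventually.of_forall fun x => ?_)
    simp only [aux_norm_iter h n (by omega), Real.norm_eq_abs]
  have key : ∀ k ≤ 2, ∃ C : ℝ, ∀ v : ℝ, (1 + |v| ^ q) * ‖iteratedDeriv k (𝓕 (gC G)) v‖ ≤ C := by
    intro k hk
    have e0 := fun v => Real.pow_mul_norm_iteratedFDeriv_fourier_le hf hi (k := k) (n := 0)
      (by exact_mod_cast hk) (by simp) v
    have e1 := fun v => Real.pow_mul_norm_iteratedFDeriv_fourier_le hf hi (k := k) (n := q)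
      (by exact_mod_cast hk) le_rfl v
    exact ⟨_, fun v => by
      have := add_le_add (e0 v) (e1 v)
      rw [pow_zero, Real.norm_eq_abs, ← add_mul, norm_iteratedFDeriv_eq_norm_iteratedDeriv] at this
      exact this⟩
  obtain ⟨C0, h0⟩ := key 0 (by norm_num)
  obtain ⟨C1, h1⟩ := key 1 (by norm_num)
  obtain ⟨C2, h2⟩ := key 2 (by norm_num)
  refine ⟨max C0 (max C1 C2), fun k hk v => ?_⟩
  interval_cases k
  · exact (h0 v).trans (le_max_left _ _)
  · exact (h1 v).trans ((le_max_left _ _).trans (le_max_right _ _))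
  · exact (h2 v).trans ((le_max_right _ _).trans (le_max_right _ _))

/-- `∂ₓ G(x,t)` in terms of `g'`. -/
lemma aux_deriv_scale {G : ℝ → ℝ → ℝ} {d : ℝ} (h : CondG2 G d) {t : ℝ} (ht : 0 < t) (x : ℝ) :
    deriv (fun y => G y t) x = (t ^ (-(1 : ℝ) / d)) ^ 2 *
      deriv (fun y => G y 1) (t ^ (-(1 : ℝ) / d) * x) := by
  have : (fun y => G y t) = fun y => t ^ (-(1 : ℝ) / d) * (fun z => G z 1) (t ^ (-(1 : ℝ) / d) * y) := by
    funext y; exact h y t ht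
  rw [this, deriv_const_mul_field, deriv_comp_mul_left (t ^ (-(1 : ℝ) / d)) (fun z => G z 1) x,
    smul_eq_mul]
  ring

open FourierTransform in
lemma aux_FT (f : ℝ → ℂ) {σ : ℝ} (hσ : 0 < σ) :
    FT (fun x => ((σ : ℂ)) ^ 2 * f (σ * x)) =
      fun ω => (σ : ℂ) * 𝓕 f ((2 * Real.pi * σ)⁻¹ * ω) := by
  funext ω
  rw [FT, Real.fourier_real_eq_integral_exp_smul]
  have hs : (σ : ℂ) ≠ 0 := by exact_mod_cast hσ.ne'
  have hpi : (Real.pi : ℂ) ≠ 0 := by exact_mod_cast Real.pi_ne_zero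
  have e := Measure.integral_comp_mul_left
    (fun v : ℝ => Complex.exp (↑(-2 * Real.pi * v * ((2 * Real.pi * σ)⁻¹ * ω)) * Complex.I) • f v) σ
  have e2 : (∫ x : ℝ, Complex.exp (-(Complex.I * ω * x)) * ((σ : ℂ) ^ 2 * f (σ * x))) =
      (σ : ℂ) ^ 2 * ∫ x : ℝ, Complex.exp
        (↑(-2 * Real.pi * (σ * x) * ((2 * Real.pi * σ)⁻¹ * ω)) * Complex.I) • f (σ * x) := by
    rw [← integral_const_mul]
    congr 1
    funext x
    have : (↑(-2 * Real.pi * (σ * x) * ((2 * Real.pi * σ)⁻¹ * ω)) * Complex.I : ℂ) =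
        -(Complex.I * ω * x) := by
      push_cast
      field_simp
    rw [this, smul_eq_mul]
    ring
  rw [e2, e, abs_of_pos (inv_pos.2 hσ), Complex.real_smul, ← mul_assoc]
  congr 1
  push_cast
  field_simp

open FourierTransform in
lemma aux_bq {G : ℝ → ℝ → ℝ} {q : ℕ} {d : ℝ} (h1 : CondG1 G q) (h2 : CondG2 G d) :
    ∀ σ₀ σ₁ : ℝ, 0 < σ₀ → ∃ K : ℝ, ∀ t : ℝ, 0 < t → σ₀ ≤ t ^ (-(1 : ℝ) / d) →
      t ^ (-(1 : ℝ) / d) ≤ σ₁ → bqNormR q (fun x => deriv (fun y => G y t) x) ≤ K := by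
  intro σ₀ σ₁ hσ₀
  obtain ⟨C, hC⟩ := aux_fourier h1
  have hC0 : 0 ≤ C := le_trans (by positivity) (hC 0 (by norm_num) 0)
  refine ⟨(1 + (2 * Real.pi * σ₁) ^ q) * (σ₁ * (C + (2 * Real.pi * σ₀)⁻¹ * C +
    (2 * Real.pi * σ₀)⁻¹ * (2 * Real.pi * σ₀)⁻¹ * C)), fun t ht hl hu => ?_⟩
  set σ := t ^ (-(1 : ℝ) / d) with hσ
  have hσp : 0 < σ := hσ₀.trans_le hl
  have hF : FT (fun x => ((deriv (fun y => G y t) x : ℝ) : ℂ)) =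
      fun ω => (σ : ℂ) * 𝓕 (gC G) ((2 * Real.pi * σ)⁻¹ * ω) := by
    rw [← aux_FT (gC G) hσp]
    congr 1
    funext x
    rw [aux_deriv_scale h2 ht, gC]
    push_cast
    rfl
  set κ := (2 * Real.pi * σ)⁻¹ with hκ
  have hκp : 0 < κ := by have := Real.pi_pos; positivity
  have hκ0 : κ ≤ (2 * Real.pi * σ₀)⁻¹ := by
    have := Real.pi_pos
    rw [hκ]; gcongr
  have hF1 : deriv (FT (fun x => ((deriv (fun y => G y t) x : ℝ) : ℂ))) =
      fun ω => (σ : ℂ) * (κ • deriv (𝓕 (gC G)) (κ * ω)) := by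
    rw [hF]; funext ω
    rw [deriv_const_mul_field, deriv_comp_mul_left]
  have hF2 : deriv (deriv (FT (fun x => ((deriv (fun y => G y t) x : ℝ) : ℂ)))) =
      fun ω => (σ : ℂ) * (κ • (κ • deriv (deriv (𝓕 (gC G))) (κ * ω))) := by
    rw [hF1]; funext ω
    rw [deriv_const_mul_field, deriv_fun_const_smul_field, deriv_comp_mul_left]
  unfold bqNormR bqNorm
  refine ciSup_le fun ω => ?_
  unfold bqFun
  rw [hF2, hF1, hF]
  simp only [norm_mul, norm_smul, Complex.norm_real, Real.norm_of_nonneg hσp.le,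
    Real.norm_of_nonneg hκp.le, Real.rpow_natCast]
  set v := κ * ω with hv
  have hω : |ω| = (2 * Real.pi * σ) * |v| := by
    rw [hv, abs_mul, abs_of_pos hκp, hκ]
    have := Real.pi_pos
    field_simp
  have c0 := hC 0 (by norm_num) v
  have c1 := hC 1 (by norm_num) v
  have c2 := hC 2 (by norm_num) v
  rw [iteratedDeriv_zero] at c0
  rw [iteratedDeriv_one] at c1
  rw [iteratedDeriv_succ, iteratedDeriv_one] at c2
  have hw : 1 + |ω| ^ q ≤ (1 + (2 * Real.pi * σ₁) ^ q) * (1 + |v| ^ q) := by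
    have hpi := Real.pi_pos
    have hvq : 0 ≤ |v| ^ q := by positivity
    have : |ω| ^ q ≤ (2 * Real.pi * σ₁) ^ q * |v| ^ q := by
      rw [hω, mul_pow]; gcongr
    have h3 : 0 ≤ (2 * Real.pi * σ₁) ^ q := by
      have : 0 < σ₁ := hσp.trans_le hu
      positivity
    nlinarith
  have hσ1 : 0 < σ₁ := hσp.trans_le hu
  have hpi := Real.pi_pos
  calc _ ≤ ((1 + (2 * Real.pi * σ₁) ^ q) * (1 + |v| ^ q)) * (σ * ‖𝓕 (gC G) v‖ +
        σ * (κ * ‖deriv (𝓕 (gC G)) v‖) + σ * (κ * (κ * ‖deriv (deriv (𝓕 (gC G))) v‖))) := by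
        gcongr
    _ = (1 + (2 * Real.pi * σ₁) ^ q) * (σ * ((1 + |v| ^ q) * ‖𝓕 (gC G) v‖ +
        κ * ((1 + |v| ^ q) * ‖deriv (𝓕 (gC G)) v‖) +
        κ * κ * ((1 + |v| ^ q) * ‖deriv (deriv (𝓕 (gC G))) v‖))) := by ring
    _ ≤ _ := by gcongr

/-- Differentiated semigroup property. -/
lemma aux_semigroup {G : ℝ → ℝ → ℝ} {q : ℕ} {d : ℝ} (hG : CondsG G q d) {a b : ℝ}
    (ha : 0 < a) (hb : 0 < b) (x : ℝ) :
    ∫ y : ℝ, G (x - y) a * deriv (fun z => G z b) y = deriv (fun z => G z (a + b)) x := by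
  obtain ⟨h1, h2, h3⟩ := hG
  have hC : ContDiff ℝ (q + 2 : ℕ) (fun x => G x 1) := h1.choose_spec.2.1
  have hg : Continuous (fun x => G x 1) := hC.continuous
  have hgd : Differentiable ℝ (fun x => G x 1) := hC.differentiable (by simp)
  have hg' : Continuous (deriv (fun x => G x 1)) := (aux_deriv_contDiff h1).continuous
  have hGfun : ∀ {t : ℝ}, 0 < t → (fun y => G y t) =
      fun y => t ^ (-(1 : ℝ) / d) * (fun z => G z 1) (t ^ (-(1 : ℝ) / d) * y) := by
    intro t ht; funext y; exact h2 y t ht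
  have hdiff : ∀ {t : ℝ}, 0 < t → Differentiable ℝ (fun y => G y t) := by
    intro t ht
    rw [hGfun ht]
    exact (hgd.comp (differentiable_id.const_mul _)).const_mul _
  have hint1 : Integrable (fun x => G x 1) := by
    have := aux_int h1 0 (by omega) 0 (by omega)
    simp only [pow_zero, one_mul, iteratedDeriv_zero] at this
    exact (integrable_norm_iff hg.aestronglyMeasurable).1 this
  have hint : Integrable (fun y => G y a) := by
    rw [hGfun ha]
    exact (hint1.comp_mul_left' (Real.rpow_pos_of_pos ha _).ne').const_mul _
  have hdc : Continuous (deriv (fun y => G y b)) := by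
    have : deriv (fun y => G y b) = fun x => (b ^ (-(1 : ℝ) / d)) ^ 2 *
      deriv (fun y => G y 1) (b ^ (-(1 : ℝ) / d) * x) := funext (aux_deriv_scale h2 hb)
    rw [this]
    fun_prop
  obtain ⟨B, hB⟩ := aux_decay h1 1 (by omega)
  have hbd1 : ∀ x, |deriv (fun y => G y 1) x| ≤ |B| := by
    intro x
    have := hB 0 (by omega) x
    rw [pow_zero, one_mul, iteratedDeriv_one] at this
    refine this.trans ?_
    have h5 : (1 + x ^ 2)⁻¹ ≤ 1 := inv_le_one_of_one_le₀ (by nlinarith [sq_nonneg x])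
    have h6 : 0 ≤ (1 + x ^ 2)⁻¹ := by positivity
    nlinarith [le_abs_self B, abs_nonneg B]
  have hbd : ∀ x, |deriv (fun y => G y b) x| ≤ (b ^ (-(1 : ℝ) / d)) ^ 2 * |B| := by
    intro x
    rw [aux_deriv_scale h2 hb, abs_mul, abs_of_nonneg (sq_nonneg _)]
    exact mul_le_mul_of_nonneg_left (hbd1 _) (by positivity)
  obtain ⟨B0, hB0⟩ := aux_decay h1 0 (by omega)
  have hbd0 : ∀ x, |G x 1| ≤ |B0| := by
    intro x
    have := hB0 0 (by omega) x
    rw [pow_zero, one_mul, iteratedDeriv_zero] at this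
    refine this.trans ?_
    have h5 : (1 + x ^ 2)⁻¹ ≤ 1 := inv_le_one_of_one_le₀ (by nlinarith [sq_nonneg x])
    have h6 : 0 ≤ (1 + x ^ 2)⁻¹ := by positivity
    nlinarith [le_abs_self B0, abs_nonneg B0]
  have hbdb : ∀ x, ‖G x b‖ ≤ b ^ (-(1 : ℝ) / d) * |B0| := by
    intro x
    have hbp := Real.rpow_pos_of_pos hb (-(1 : ℝ) / d)
    rw [Real.norm_eq_abs, h2 x b hb, abs_mul, abs_of_pos hbp]
    exact mul_le_mul_of_nonneg_left (hbd0 _) hbp.le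
  have hconv : (fun z => G z (a + b)) = fun z => ∫ y : ℝ, G y a * G (z - y) b := by
    funext z
    rw [h3 z (a + b) b hb (by linarith), add_sub_cancel_right,
      ← integral_sub_left_eq_self (fun y => G y a * G (z - y) b) volume z]
    simp
  have hcb : Continuous (fun y => G y b) := (hdiff hb).continuous
  have hca : Continuous (fun y => G y a) := (hdiff ha).continuous
  have hmain := hasDerivAt_integral_of_dominated_loc_of_deriv_le (μ := volume) (𝕜 := ℝ)
    (F := fun z y => G y a * G (z - y) b) (x₀ := x) (s := Set.univ)
    (F' := fun z y => G y a * deriv (fun w => G w b) (z - y))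
    (bound := fun y => |G y a| * ((b ^ (-(1 : ℝ) / d)) ^ 2 * |B|))
    univ_mem
    (Eventually.of_forall fun z =>
      (hca.mul (hcb.comp (continuous_const.sub continuous_id))).aestronglyMeasurable)
    (hint.mul_bdd (c := b ^ (-(1 : ℝ) / d) * |B0|)
      (hcb.comp (continuous_const.sub continuous_id)).aestronglyMeasurable
      (Eventually.of_forall fun y => hbdb _))
    (hca.mul (hdc.comp (continuous_const.sub continuous_id))).aestronglyMeasurable
    (Eventually.of_forall fun y z _ => by
      rw [norm_mul, Real.norm_eq_abs, Real.norm_eq_abs]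
      gcongr
      exact hbd _)
    (hint.abs.mul_const _)
    (Eventually.of_forall fun y z _ => by
      have := ((hdiff hb) (z - y)).hasDerivAt.comp_sub_const z y
      exact this.const_mul _)
  rw [hconv, hmain.2.deriv,
    ← integral_sub_left_eq_self (fun y => G y a * deriv (fun w => G w b) (x - y)) volume x]
  simp

/-- Integrability of `c` up to `1`. -/
lemma aux_cint {c : ℝ → ℝ} {p L₀ : ℝ} (hc : CondC c p) (hL₀ : CondL0 c p L₀) {t : ℝ}
    (ht : 1 ≤ t) : IntervalIntegrable c volume 1 t := by
  by_contra hn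
  obtain ⟨hp, -⟩ := hc
  obtain ⟨hL, hr⟩ := hL₀
  have htend : Tendsto (fun x : ℝ => x ^ (p + 1)) atTop atTop :=
    tendsto_rpow_atTop (by linarith)
  obtain ⟨x, ⟨hx1, hx2⟩, hx3⟩ := (((htend.eventually_gt_atTop 2).and
    (eventually_gt_atTop L₀)).and (eventually_gt_atTop t)).exists
  have hz : sF c x = 0 := by
    unfold sF
    apply intervalIntegral.integral_undef
    intro h
    exact hn (h.mono_set (by
      rw [Set.uIcc_of_le ht, Set.uIcc_of_le (ht.trans hx3.le)]
      exact Set.Icc_subset_Icc le_rfl hx3.le))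
  have := hr x hx2
  rw [rF, hz, zero_sub, abs_neg, abs_of_nonneg (by apply div_nonneg <;> linarith),
    div_div, div_lt_div_iff₀ (by positivity) (by positivity)] at this
  nlinarith

lemma aux_sn_pos {c : ℝ → ℝ} {p L₀ L : ℝ} (hc : CondC c p) (hL₀ : CondL0 c p L₀)
    (hL : 1 < L) (n : ℕ) : 0 < sn c p L n L := by
  have hLn : 1 ≤ L ^ n := one_le_pow₀ hL.le
  have hlt : L ^ n < L ^ n * L := by nlinarith
  have i1 := aux_cint hc hL₀ hLn
  have i2 := aux_cint hc hL₀ (hLn.trans hlt.le)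
  unfold sn sF
  rw [intervalIntegral.integral_interval_sub_left i2 i1]
  apply div_pos _ (by positivity)
  exact intervalIntegral.intervalIntegral_pos_of_pos_on (i1.symm.trans i2)
    (fun x hx => hc.2.1 x (hLn.trans_lt hx.1)) hlt

/-- The effective time `T_n`. -/
noncomputable def Teff (c : ℝ → ℝ) (p L : ℝ) (n : ℕ) : ℝ :=
  (1 / (p + 1) + sF c (L ^ n)) / L ^ ((n : ℝ) * (p + 1))

lemma aux_Teff_pos {c : ℝ → ℝ} {p L : ℝ} (hc : CondC c p) (hL : 1 < L) (n : ℕ) :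
    0 < Teff c p L n := by
  have hLn : 1 ≤ L ^ n := one_le_pow₀ hL.le
  have hp := hc.1
  have : 0 ≤ sF c (L ^ n) := by
    unfold sF
    rw [intervalIntegral.integral_of_le hLn]
    exact setIntegral_nonneg measurableSet_Ioc fun x hx => (hc.2.1 x hx.1).le
  unfold Teff
  positivity

lemma aux_iter {G : ℝ → ℝ → ℝ} {q : ℕ} {d : ℝ} {c : ℝ → ℝ} {p L₀ L : ℝ} (hG : CondsG G q d)
    (hc : CondC c p) (hL₀ : CondL0 c p L₀) (hL : 1 < L) (n : ℕ) :
    RG0iter G c p d L n (Gp G p) = fun x => deriv (fun y => G y (Teff c p L n)) x := by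
  have hL0 : 0 < L := by linarith
  induction n with
  | zero =>
    have : Teff c p L 0 = 1 / (p + 1) := by simp [Teff, sF]
    rw [this]; rfl
  | succ n ih =>
    have hT := aux_Teff_pos hc hL n
    have hT' := aux_Teff_pos hc hL (n + 1)
    have hs := aux_sn_pos hc hL₀ hL n
    have hrec : sn c p L n L + Teff c p L n = L ^ (p + 1) * Teff c p L (n + 1) := by
      unfold sn Teff
      have e : L ^ (((n + 1 : ℕ) : ℝ) * (p + 1)) = L ^ ((n : ℝ) * (p + 1)) * L ^ (p + 1) := by
        rw [← Real.rpow_add hL0]; congr 1; push_cast; ring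
      rw [e, ← pow_succ]
      have h1 : L ^ ((n : ℝ) * (p + 1)) ≠ 0 := (Real.rpow_pos_of_pos hL0 _).ne'
      have h2 : L ^ (p + 1) ≠ 0 := (Real.rpow_pos_of_pos hL0 _).ne'
      have h3 : p + 1 ≠ 0 := by linarith [hc.1]
      field_simp
      ring
    funext x
    change RG0 G c p d L n (RG0iter G c p d L n (Gp G p)) x = _
    rw [ih]
    unfold RG0 linSol
    rw [aux_semigroup hG hs hT, aux_deriv_scale hG.2.1 (by positivity),
      aux_deriv_scale hG.2.1 hT', hrec, Real.mul_rpow (by positivity) hT'.le,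
      ← Real.rpow_mul hL0.le]
    have e1 : L ^ ((p + 1) * (-1 / d)) * L ^ ((p + 1) / d) = 1 := by
      rw [← Real.rpow_add hL0]
      convert Real.rpow_zero L using 2
      ring
    have e2 : L ^ (2 * (p + 1) / d) = (L ^ ((p + 1) / d)) ^ 2 := by
      rw [← Real.rpow_natCast, ← Real.rpow_mul hL0.le]
      congr 1; push_cast; ring
    rw [e2]
    set A := L ^ ((p + 1) * (-1 / d))
    set D := L ^ ((p + 1) / d)
    set τ := Teff c p L (n + 1) ^ (-1 / d)
    have e3 : A * τ * (D * x) = τ * x := by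
      calc A * τ * (D * x) = (A * D) * (τ * x) := by ring
        _ = _ := by rw [e1, one_mul]
    rw [e3, ← mul_assoc]
    congr 1
    calc D ^ 2 * (A * τ) ^ 2 = (A * D) ^ 2 * τ ^ 2 := by ring
      _ = _ := by rw [e1]; ring

lemma aux_Teff_bds {c : ℝ → ℝ} {p L₀ L : ℝ} (hc : CondC c p) (hL₀ : CondL0 c p L₀)
    (hL : L₀ < L) (n : ℕ) (hn : 1 ≤ n) :
    3 / (4 * (p + 1)) ≤ Teff c p L n ∧ Teff c p L n ≤ 5 / (4 * (p + 1)) := by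
  have hp := hc.1
  have hL1 : 1 < L := hL₀.1.trans hL
  have hL0 : 0 < L := by linarith
  have hLn : L₀ < L ^ n := hL.trans_le (le_self_pow₀ hL1.le (by omega))
  have hr := hL₀.2 _ hLn
  have e : L ^ ((n : ℝ) * (p + 1)) = (L ^ n) ^ (p + 1) := by
    rw [Real.rpow_mul hL0.le, Real.rpow_natCast]
  have hP : 0 < (L ^ n) ^ (p + 1) := by positivity
  have hT : Teff c p L n = 1 / (p + 1) + rF c p (L ^ n) / (L ^ n) ^ (p + 1) := by
    unfold Teff rF
    rw [e]
    field_simp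
    ring
  rw [← abs_of_pos hP, ← abs_div, abs_lt] at hr
  rw [hT]
  have e3 : 3 / (4 * (p + 1)) = 1 / (p + 1) - 1 / (4 * (p + 1)) := by field_simp; norm_num
  have e5 : 5 / (4 * (p + 1)) = 1 / (p + 1) + 1 / (4 * (p + 1)) := by field_simp; norm_num
  rw [e3, e5]
  constructor <;> linarith [hr.1, hr.2]

/-- Lemma 2.6: uniform bound `‖R⁰_{Lⁿ}G_p‖ ≤ K̃` for all
`L > L₁` and `n ≥ 1`. -/
theorem rg_iter_Gp_bounded
    (G : ℝ → ℝ → ℝ) (q : ℕ) (d : ℝ) (c : ℝ → ℝ) (p L₀ : ℝ)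
    (hq : 1 < q) (hd : 0 < d) (hG : CondsG G q d) (hc : CondC c p)
    (hL₀ : CondL0 c p L₀) :
    ∃ Kt : ℝ, ∀ L : ℝ, Lone p L₀ < L → ∀ n : ℕ, 1 ≤ n →
      bqNormR q (RG0iter G c p d L n (Gp G p)) ≤ Kt := by
  have hp := hc.1
  obtain ⟨K, hK⟩ := aux_bq hG.1 hG.2.1 ((5 / (4 * (p + 1))) ^ (-(1 : ℝ) / d))
    ((3 / (4 * (p + 1))) ^ (-(1 : ℝ) / d)) (by positivity)
  refine ⟨K, fun L hL n hn => ?_⟩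
  have hL' : L₀ < L := (le_max_left _ _).trans_lt hL
  have hL1 : 1 < L := hL₀.1.trans hL'
  obtain ⟨b1, b2⟩ := aux_Teff_bds hc hL₀ hL' n hn
  have hT := aux_Teff_pos hc hL1 n
  have hneg : -(1 : ℝ) / d ≤ 0 := by
    rw [neg_div]; exact neg_nonpos.2 (by positivity)
  rw [aux_iter hG hc hL₀ hL1 n]
  exact hK _ hT (Real.rpow_le_rpow_of_nonpos hT b2 hneg)
    (Real.rpow_le_rpow_of_nonpos (by positivity) b1 hneg)
end
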